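/- arXiv:1009.2939 — 6 statements merged into one kernel-verified Lean document; each statement's English description precedes it below -/
import Mathlib

section
/- Let f : ℝ → ℝ be a function, let s ⊆ ℝ be a set, and let x be a real number. Then the total variation of f on s equals the total variation of t ↦ min(f(t), x) on s plus the total variation of t ↦ max(f(t), x) on s. -/
/-!
Both `a ↦ min a x` and `a ↦ max a x` are monotone and they sum to `a + x`, so every increment of
`f` has absolute value equal to the sum of those of its two truncations (`edist_min_add_max`).
Summing over a partition gives `≤`. For `≥`, the two suprema on the right-hand side must be
approximated along a common partition: on a finite set the variation is the sum over consecutive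
points, so the identity holds there exactly (`eVariationOn_finset_min_add_max`), and it is applied
to the union of two finite sets supporting arbitrary partitions for the two truncations.
-/

open Set

lemma edist_min_add_max (a b x : ℝ) :
    edist a b = edist (min a x) (min b x) + edist (max a x) (max b x) := by
  simp only [edist_dist]
  rw [← ENNReal.ofReal_add dist_nonneg dist_nonneg]
  congr 1
  simp only [Real.dist_eq]
  grind

/-- The split identity on finite sets, by adding points in increasing order: a new largest point
increases the variation by the distance to the value at the previous largest point. -/
lemma eVariationOn_finset_min_add_max (f : ℝ → ℝ) (x : ℝ) (t : Finset ℝ) :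
    eVariationOn f t =
      eVariationOn (fun t => min (f t) x) t + eVariationOn (fun t => max (f t) x) t := by
  induction t using Finset.induction_on_max with
  | empty => simp
  | insert a t hlt ih =>
    rcases t.eq_empty_or_nonempty with rfl | ht
    · simp
    · have step (g : ℝ → ℝ) : eVariationOn g (insert a t : Finset ℝ) =
          eVariationOn g t + edist (g (t.max' ht)) (g a) := by
        rw [Finset.coe_insert, ← union_singleton,
          eVariationOn.union' g (t.isGreatest_max' ht) isLeast_singleton
            (hlt _ (t.max'_mem ht)).le]
        simp
      rw [step, step, step, ih, edist_min_add_max _ _ x]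
      abel

/-- Split Lemma (total variation form): the total variation of `f` on `s`
splits exactly at any level `x` into the variation of `min (f t) x` plus the
variation of `max (f t) x`. -/
theorem eVariationOn_eq_min_add_max (f : ℝ → ℝ) (s : Set ℝ) (x : ℝ) :
    eVariationOn f s =
      eVariationOn (fun t => min (f t) x) s +
        eVariationOn (fun t => max (f t) x) s := by
  apply le_antisymm
  · refine iSup_le fun ⟨n, u, hu, us⟩ => ?_
    rw [Finset.sum_congr rfl fun i _ => edist_min_add_max (f (u (i + 1))) (f (u i)) x,
      Finset.sum_add_distrib]
    exact add_le_add (eVariationOn.sum_le (f := fun t => min (f t) x) hu us)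
      (eVariationOn.sum_le (f := fun t => max (f t) x) hu us)
  · rcases s.eq_empty_or_nonempty with rfl | hs
    · simp
    have := eVariationOn.nonempty_monotone_mem hs
    refine ENNReal.iSup_add_iSup_le fun ⟨n, u, hu, us⟩ ⟨m, v, hv, vs⟩ => ?_
    -- The points of both partitions, gathered in one finite subset of `s`.
    let t : Finset ℝ := (Finset.range (n + 1)).image u ∪ (Finset.range (m + 1)).image v
    have hts : (t : Set ℝ) ⊆ s := by
      intro y hy
      simp only [t, Finset.coe_union, Finset.coe_image, mem_union, mem_image] at hy
      rcases hy with ⟨i, -, rfl⟩ | ⟨i, -, rfl⟩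
      exacts [us i, vs i]
    refine le_trans ?_ (eVariationOn.mono f hts)
    rw [eVariationOn_finset_min_add_max f x t]
    refine add_le_add
      (eVariationOn.sum_le_of_monotoneOn_Iic (f := fun t => min (f t) x) (hu.monotoneOn _) ?_)
      (eVariationOn.sum_le_of_monotoneOn_Iic (f := fun t => max (f t) x) (hv.monotoneOn _) ?_)
    · exact fun i hi => Finset.mem_union_left _
        (Finset.mem_image_of_mem u (Finset.mem_range.2 (Nat.lt_succ_of_le hi)))
    · exact fun i hi => Finset.mem_union_right _
        (Finset.mem_image_of_mem v (Finset.mem_range.2 (Nat.lt_succ_of_le hi)))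
end

section
/- Let a, b, x be real numbers and let γ : [0,1] → ℝ be a continuous function with γ(0) = a and γ(1) = b. Define γ⁻(t) = min(γ(t), x) and γ⁺(t) = max(γ(t), x). Then: (i) γ⁻ is continuous, γ⁻(0) = min(a, x), γ⁻(1) = min(b, x), and γ⁻(t) ≤ x for all t ∈ [0,1]; (ii) γ⁺ is continuous, γ⁺(0) = max(a, x), γ⁺(1) = max(b, x), and γ⁺(t) ≥ x for all t ∈ [0,1]; (iii) γ⁻(t) + γ⁺(t) = γ(t) + x for all t ∈ [0,1]; and (iv) the total variation of γ on [0,1] equals the total variation of γ⁻ on [0,1] plus the total variation of γ⁺ on [0,1]. -/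
/-!
Clamping to either side of `x` is monotone, and `min p x + max p x = p + x`, so the increments of
`min (γ ·) x` and `max (γ ·) x` between two points have the same sign and add up to the increment
of `γ`; hence the distances add exactly (`edist_min_add_edist_max`). Variation is additive in such
a situation (`eVariationOn_add_of_edist_add`): on a finite set it is the sum of the consecutive
distances, and two partitions, one for each summand, have a common finite refinement.
-/

open Set

theorem edist_min_add_edist_max (p q x : ℝ) :
    edist p q = edist (min p x) (min q x) + edist (max p x) (max q x) := by
  simp only [edist_dist, Real.dist_eq]
  rw [← ENNReal.ofReal_add (abs_nonneg _) (abs_nonneg _)]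
  congr 1
  rcases le_total p x with hp | hp <;> rcases le_total q x with hq | hq <;> simp [hp, hq]
  · rw [abs_of_nonpos (by linarith), abs_of_nonpos (by linarith),
      abs_of_nonpos (by linarith)]
    ring
  · rw [abs_of_nonneg (by linarith), abs_of_nonneg (by linarith),
      abs_of_nonneg (by linarith)]
    ring

theorem eVariationOn_finset_add_of_edist_add {f g h : ℝ → ℝ}
    (H : ∀ s t, edist (h s) (h t) = edist (f s) (f t) + edist (g s) (g t)) (T : Finset ℝ) :
    eVariationOn h T = eVariationOn f T + eVariationOn g T := by
  induction T using Finset.induction_on_max with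
  | empty => simp
  | insert c T hc ih =>
    rcases T.eq_empty_or_nonempty with rfl | hT
    · simp
    · have hmax : IsGreatest (T : Set ℝ) (T.max' hT) := T.isGreatest_max' hT
      have hle : T.max' hT ≤ c := (hc _ (T.max'_mem hT)).le
      have hset : ((insert c T : Finset ℝ) : Set ℝ) = (T : Set ℝ) ∪ {c} := by
        rw [Finset.coe_insert, Set.union_singleton]
      rw [hset, eVariationOn.union' h hmax isLeast_singleton hle,
        eVariationOn.union' f hmax isLeast_singleton hle,
        eVariationOn.union' g hmax isLeast_singleton hle, ih, H]
      simp only [eVariationOn.subsingleton _ Set.subsingleton_singleton, add_zero]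
      exact add_add_add_comm _ _ _ _

theorem sum_edist_le_eVariationOn_finset (f : ℝ → ℝ) {u : ℕ → ℝ} (hu : Monotone u) (n : ℕ)
    {T : Finset ℝ} (hT : (Finset.range (n + 1)).image u ⊆ T) :
    ∑ i ∈ Finset.range n, edist (f (u (i + 1))) (f (u i)) ≤ eVariationOn f T :=
  eVariationOn.sum_le_of_monotoneOn_Iic (hu.monotoneOn _) fun _ hi =>
    hT (Finset.mem_image_of_mem u (Finset.mem_range.2 (Nat.lt_succ_of_le hi)))

theorem eVariationOn_add_of_edist_add {f g h : ℝ → ℝ}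
    (H : ∀ s t, edist (h s) (h t) = edist (f s) (f t) + edist (g s) (g t))
    {S : Set ℝ} (hS : S.Nonempty) :
    eVariationOn h S = eVariationOn f S + eVariationOn g S := by
  have := eVariationOn.nonempty_monotone_mem hS
  apply le_antisymm
  · refine iSup_le fun ⟨n, u, hu, us⟩ => ?_
    simp only [H, Finset.sum_add_distrib]
    exact add_le_add (eVariationOn.sum_le hu us) (eVariationOn.sum_le hu us)
  · refine ENNReal.iSup_add_iSup_le fun ⟨n, u, hu, us⟩ ⟨m, v, hv, vs⟩ => ?_
    -- the common refinement of the two partitions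
    let T : Finset ℝ := (Finset.range (n + 1)).image u ∪ (Finset.range (m + 1)).image v
    have hTS : (T : Set ℝ) ⊆ S := by
      intro t ht
      rcases Finset.mem_union.1 (Finset.mem_coe.1 ht) with ht | ht
      · obtain ⟨i, -, rfl⟩ := Finset.mem_image.1 ht
        exact us i
      · obtain ⟨i, -, rfl⟩ := Finset.mem_image.1 ht
        exact vs i
    calc _ ≤ eVariationOn f T + eVariationOn g T :=
          add_le_add (sum_edist_le_eVariationOn_finset f hu n Finset.subset_union_left)
            (sum_edist_le_eVariationOn_finset g hv m Finset.subset_union_right)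
      _ = eVariationOn h T := (eVariationOn_finset_add_of_edist_add H T).symm
      _ ≤ eVariationOn h S := eVariationOn.mono h hTS

/-- Split Lemma (path form): a continuous path `γ` on `[0,1]` from `a` to `b`
splits at level `x` into the truncated paths `min (γ t) x` and `max (γ t) x`,
which are continuous, have the truncated endpoints, stay on their respective
sides of `x`, sum to `γ t + x`, and whose total variations add up to the total
variation of `γ`. -/
theorem jeep_split_lemma_path (a b x : ℝ) (γ : ℝ → ℝ)
    (hγ : ContinuousOn γ (Icc (0 : ℝ) 1)) (h0 : γ 0 = a) (h1 : γ 1 = b) :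
    (ContinuousOn (fun t => min (γ t) x) (Icc (0 : ℝ) 1) ∧
      min (γ 0) x = min a x ∧ min (γ 1) x = min b x ∧
      ∀ t ∈ Icc (0 : ℝ) 1, min (γ t) x ≤ x) ∧
    (ContinuousOn (fun t => max (γ t) x) (Icc (0 : ℝ) 1) ∧
      max (γ 0) x = max a x ∧ max (γ 1) x = max b x ∧
      ∀ t ∈ Icc (0 : ℝ) 1, x ≤ max (γ t) x) ∧
    (∀ t ∈ Icc (0 : ℝ) 1, min (γ t) x + max (γ t) x = γ t + x) ∧
    eVariationOn γ (Icc (0 : ℝ) 1) =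
      eVariationOn (fun t => min (γ t) x) (Icc (0 : ℝ) 1) +
        eVariationOn (fun t => max (γ t) x) (Icc (0 : ℝ) 1) := by
  refine ⟨⟨hγ.inf continuousOn_const, by rw [h0], by rw [h1], fun t _ => min_le_right _ _⟩,
    ⟨hγ.sup continuousOn_const, by rw [h0], by rw [h1], fun t _ => le_max_right _ _⟩,
    fun t _ => min_add_max _ _, ?_⟩
  exact eVariationOn_add_of_edist_add (fun s t => edist_min_add_edist_max (γ s) (γ t) x)
    (nonempty_Icc.2 zero_le_one)
end

section
/- Let a < b be real numbers and let f : [a,b] → ℝ be continuous, nowhere constant on [a,b], and such that the set of local extremum points of f on [a,b] is finite. Suppose f has a local minimum on [a,b] at some point of the open interval (a,b), that f attains its global minimum over [a,b] at a, and that f attains either its global minimum or its global maximum over [a,b] at b. Then there exist points s₁ < s₂ < s₃ < s₄ in [a,b] such that f(s₁) = f(s₃), f(s₂) = f(s₄), and f(s₁) ≠ f(s₂). -/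
open Set

/-!
The zigzag is low–high–low–high, with the interior local minimum `t` as its third point. Since `f`
is nowhere constant, there are points `p < t < q` close to `t` with `f p, f q > f t`. Put
`h = min (f p) (f q) > f t`. As `f a ≤ f t < f p`, the intermediate value theorem gives
`s₁ ∈ [a, p]` with `f s₁ = f t`, then `s₂ ∈ [s₁, p]` with `f s₂ = h`, and `s₄ ∈ [t, q]` with
`f s₄ = h`.
-/

/-- Graph lemma: a continuous, nowhere-constant function on `[a,b]` with
finitely many local extremum points, an interior local minimum, a global
minimum at `a`, and a global extremum at `b`, contains a zigzag of four
points alternating between two distinct values. -/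
theorem graph_lemma (a b : ℝ) (hab : a < b) (f : ℝ → ℝ)
    (hcont : ContinuousOn f (Icc a b))
    (hnc : ∀ c d : ℝ, a ≤ c → c < d → d ≤ b →
      ¬ ∀ s ∈ Icc c d, ∀ t ∈ Icc c d, f s = f t)
    (hfin : {t ∈ Icc a b |
      IsLocalMaxOn f (Icc a b) t ∨ IsLocalMinOn f (Icc a b) t}.Finite)
    (hintmin : ∃ t ∈ Ioo a b, IsLocalMinOn f (Icc a b) t)
    (hmina : ∀ t ∈ Icc a b, f a ≤ f t)
    (hextb : (∀ t ∈ Icc a b, f b ≤ f t) ∨ (∀ t ∈ Icc a b, f t ≤ f b)) :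
    ∃ s₁ s₂ s₃ s₄ : ℝ, s₁ ∈ Icc a b ∧ s₂ ∈ Icc a b ∧ s₃ ∈ Icc a b ∧
      s₄ ∈ Icc a b ∧ s₁ < s₂ ∧ s₂ < s₃ ∧ s₃ < s₄ ∧
      f s₁ = f s₃ ∧ f s₂ = f s₄ ∧ f s₁ ≠ f s₂ := by
  obtain ⟨t, ⟨hat, htb⟩, hmin⟩ := hintmin
  obtain ⟨ε, hε, hball⟩ := Metric.mem_nhdsWithin_iff.1 hmin
  -- `f ≥ f t` near `t`, so a small interval containing `t` without a strictly higher point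
  -- would be an interval of constancy.
  have key : ∀ c d : ℝ, a ≤ c → c < d → d ≤ b → t - ε < c → d < t + ε → t ∈ Icc c d →
      ∃ p ∈ Icc c d, f t < f p := by
    intro c d hac hcd hdb hc hd ht
    by_contra! hle
    have heq : ∀ s ∈ Icc c d, f s = f t := by
      intro s hs
      have hst : f t ≤ f s := by
        apply hball
        refine ⟨?_, hac.trans hs.1, hs.2.trans hdb⟩
        rw [Metric.mem_ball, Real.dist_eq, abs_lt]
        constructor <;> linarith [hs.1, hs.2]
      exact le_antisymm (hle s hs) hst
    exact hnc c d hac hcd hdb fun s hs u hu => (heq s hs).trans (heq u hu).symm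
  obtain ⟨p, ⟨hp, hpt⟩, hfp⟩ := key (max a (t - ε / 2)) t (le_max_left _ _)
    (max_lt hat (by linarith)) htb.le (lt_max_of_lt_right (by linarith)) (by linarith)
    ⟨max_le hat.le (by linarith), le_rfl⟩
  obtain ⟨q, ⟨htq, hq⟩, hfq⟩ := key t (min b (t + ε / 2)) hat.le
    (lt_min htb (by linarith)) (min_le_left _ _) (by linarith)
    (min_lt_of_right_lt (by linarith)) ⟨le_rfl, le_min htb.le (by linarith)⟩
  have hap : a ≤ p := (le_max_left _ _).trans hp
  have hqb : q ≤ b := hq.trans (min_le_left _ _)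
  have hth : f t < min (f p) (f q) := lt_min hfp hfq
  obtain ⟨s₁, ⟨has₁, hs₁p⟩, hs₁⟩ := intermediate_value_Icc hap
    (hcont.mono (Icc_subset_Icc_right (hpt.trans htb.le)))
    ⟨hmina t ⟨hat.le, htb.le⟩, hfp.le⟩
  obtain ⟨s₂, ⟨hs₁₂, hs₂p⟩, hs₂⟩ := intermediate_value_Icc hs₁p
    (hcont.mono (Icc_subset_Icc has₁ (hpt.trans htb.le)))
    ⟨hs₁.trans_le hth.le, min_le_left (f p) (f q)⟩
  obtain ⟨s₄, ⟨hts₄, hs₄q⟩, hs₄⟩ := intermediate_value_Icc htq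
    (hcont.mono (Icc_subset_Icc hat.le hqb)) ⟨hth.le, min_le_right (f p) (f q)⟩
  refine ⟨s₁, s₂, t, s₄, ⟨has₁, by linarith⟩, ⟨by linarith, by linarith⟩, ⟨hat.le, htb.le⟩,
    ⟨by linarith, by linarith⟩, hs₁₂.lt_of_ne ?_, (hs₂p.trans hpt).lt_of_ne ?_,
    hts₄.lt_of_ne ?_, hs₁, hs₂.trans hs₄.symm, by rw [hs₁, hs₂]; exact hth.ne⟩
  · rintro rfl
    linarith
  · rintro rfl
    linarith
  · rintro rfl
    linarith
end

section
/- Let a < b be real numbers and let f : [a,b] → ℝ be continuous, nowhere constant on [a,b], and such that the set E of local extremum points of f on [a,b] is finite. If t₁ < t₂ are points of E ∪ {a, b} such that no point of E lies in the open interval (t₁, t₂), then f is strictly monotone on the interval [t₁, t₂]. -/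
open Set

/-!
If `f` took equal values at two points of `[t₁, t₂]`, Rolle's argument (the extreme value theorem,
without derivatives) would produce a local extremum strictly between them, contradicting the
absence of points of `E` in `(t₁, t₂)`. So `f` is injective on `[t₁, t₂]`, and a continuous
injective function on an interval is strictly monotone.
-/

/-- Between consecutive local extrema (or endpoints), a continuous,
nowhere-constant function with finitely many local extremum points is
strictly monotone. -/
theorem strict_mono_between_consecutive_extrema (a b : ℝ) (hab : a < b)
    (f : ℝ → ℝ) (hcont : ContinuousOn f (Icc a b))
    (hnc : ∀ c d : ℝ, a ≤ c → c < d → d ≤ b →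
      ¬ ∀ s ∈ Icc c d, ∀ t ∈ Icc c d, f s = f t)
    (E : Set ℝ)
    (hE : E = {t ∈ Icc a b |
      IsLocalMaxOn f (Icc a b) t ∨ IsLocalMinOn f (Icc a b) t})
    (hfin : E.Finite)
    (t₁ t₂ : ℝ) (ht₁ : t₁ ∈ E ∪ {a, b}) (ht₂ : t₂ ∈ E ∪ {a, b})
    (hlt : t₁ < t₂) (hgap : ∀ t ∈ E, t ∉ Ioo t₁ t₂) :
    StrictMonoOn f (Icc t₁ t₂) ∨ StrictAntiOn f (Icc t₁ t₂) := by
  have mem_Icc : ∀ t ∈ E ∪ {a, b}, t ∈ Icc a b := by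
    rintro t (ht | rfl | rfl)
    · rw [hE] at ht
      exact ht.1
    · exact left_mem_Icc.2 hab.le
    · exact right_mem_Icc.2 hab.le
  have h₁ := mem_Icc t₁ ht₁
  have h₂ := mem_Icc t₂ ht₂
  -- If `f x = f y` with `x < y`, the topological part of Rolle's theorem gives a local
  -- extremum strictly between `x` and `y`, hence a point of `E` in the gap.
  have key : ∀ x ∈ Icc t₁ t₂, ∀ y ∈ Icc t₁ t₂, x < y → f x ≠ f y := by
    intro x hx y hy hxy hf
    have hxa : a ≤ x := h₁.1.trans hx.1
    have hyb : y ≤ b := hy.2.trans h₂.2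
    obtain ⟨c, hc, hext⟩ := exists_isLocalExtr_Ioo hxy (hcont.mono (Icc_subset_Icc hxa hyb)) hf
    refine hgap c ?_ ⟨hx.1.trans_lt hc.1, hc.2.trans_le hy.2⟩
    rw [hE]
    refine ⟨⟨hxa.trans hc.1.le, hc.2.le.trans hyb⟩, ?_⟩
    rcases hext with h | h
    · exact Or.inr (IsLocalMin.on h _)
    · exact Or.inl (IsLocalMax.on h _)
  -- A continuous injective function on an interval is strictly monotone.
  refine ContinuousOn.strictMonoOn_of_injOn_Icc' hlt.le
    (hcont.mono (Icc_subset_Icc h₁.1 h₂.2)) ?_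
  intro x hx y hy hf
  rcases lt_trichotomy x y with h | h | h
  · exact absurd hf (key x hx y hy h)
  · exact h
  · exact absurd hf.symm (key y hy x hx h)
end

section
/- Let a < b be real numbers and let f : [a,b] → ℝ be continuous, nowhere constant on [a,b], and such that the set E of local extremum points of f on [a,b] is finite. If t₁ < t₂ are points of E with no point of E in the open interval (t₁, t₂), and f has a local maximum on [a,b] at t₁, then f has a local minimum on [a,b] at t₂. -/
open Set

/-!
Suppose `f` has a local maximum at `t₂` as well. By compactness `f` attains its minimum over
`[t₁, t₂]` at some `m`. If `m` is interior, it is a local minimum point strictly between `t₁` and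
`t₂`, which is excluded. If `m` is an endpoint, then near `m` inside `[t₁, t₂]` the values of `f`
are at least `f m` (minimality) and at most `f m` (local maximum), so `f` is constant on a
nondegenerate interval, which is excluded too.
-/

/-- Consecutive local extrema of a continuous, nowhere-constant function with
finitely many local extremum points alternate in type: after a local maximum,
the next extremum is a local minimum. -/
theorem extrema_alternate (a b : ℝ) (hab : a < b)
    (f : ℝ → ℝ) (hcont : ContinuousOn f (Icc a b))
    (hnc : ∀ c d : ℝ, a ≤ c → c < d → d ≤ b →
      ¬ ∀ s ∈ Icc c d, ∀ t ∈ Icc c d, f s = f t)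
    (E : Set ℝ)
    (hE : E = {t ∈ Icc a b |
      IsLocalMaxOn f (Icc a b) t ∨ IsLocalMinOn f (Icc a b) t})
    (hfin : E.Finite)
    (t₁ t₂ : ℝ) (ht₁ : t₁ ∈ E) (ht₂ : t₂ ∈ E) (hlt : t₁ < t₂)
    (hgap : ∀ t ∈ E, t ∉ Ioo t₁ t₂)
    (hmax : IsLocalMaxOn f (Icc a b) t₁) :
    IsLocalMinOn f (Icc a b) t₂ := by
  have hE₁ := ht₁
  have hE₂ := ht₂
  rw [hE] at hE₁ hE₂
  obtain ⟨⟨ha₁, hb₁⟩, -⟩ := hE₁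
  obtain ⟨⟨ha₂, hb₂⟩, hmax₂ | hmin₂⟩ := hE₂
  swap
  · exact hmin₂
  exfalso
  have hsub : Icc t₁ t₂ ⊆ Icc a b := Icc_subset_Icc ha₁ hb₂
  obtain ⟨m, hm, hmin⟩ := isCompact_Icc.exists_isMinOn (nonempty_Icc.2 hlt.le) (hcont.mono hsub)
  rw [isMinOn_iff] at hmin
  rcases eq_or_lt_of_le hm.1 with h₁ | h₁
  · subst h₁
    obtain ⟨ε, hε, hball⟩ := Metric.mem_nhdsWithin_iff.1 hmax
    have hc : t₁ < min (t₁ + ε / 2) t₂ := lt_min (by linarith) hlt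
    have key : ∀ s ∈ Icc t₁ (min (t₁ + ε / 2) t₂), f s = f t₁ := by
      rintro s ⟨hs₁, hs₂⟩
      have hs₃ := hs₂.trans (min_le_left _ _)
      have hs : s ∈ Icc t₁ t₂ := ⟨hs₁, hs₂.trans (min_le_right _ _)⟩
      refine le_antisymm (hball ⟨?_, hsub hs⟩) (hmin s hs)
      rw [Metric.mem_ball, Real.dist_eq, abs_lt]
      constructor <;> linarith
    exact hnc _ _ ha₁ hc ((min_le_right _ _).trans hb₂)
      fun s hs t ht => (key s hs).trans (key t ht).symm
  rcases eq_or_lt_of_le hm.2 with h₂ | h₂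
  · subst h₂
    obtain ⟨ε, hε, hball⟩ := Metric.mem_nhdsWithin_iff.1 hmax₂
    have hc : max (m - ε / 2) t₁ < m := max_lt (by linarith) hlt
    have key : ∀ s ∈ Icc (max (m - ε / 2) t₁) m, f s = f m := by
      rintro s ⟨hs₁, hs₂⟩
      have hs₃ := (le_max_left _ _).trans hs₁
      have hs : s ∈ Icc t₁ m := ⟨(le_max_right _ _).trans hs₁, hs₂⟩
      refine le_antisymm (hball ⟨?_, hsub hs⟩) (hmin s hs)
      rw [Metric.mem_ball, Real.dist_eq, abs_lt]
      constructor <;> linarith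
    exact hnc _ _ (ha₁.trans (le_max_right _ _)) hc hb₂
      fun s hs t ht => (key s hs).trans (key t ht).symm
  · refine hgap m ?_ ⟨h₁, h₂⟩
    rw [hE]
    refine ⟨hsub hm, Or.inr ?_⟩
    exact mem_nhdsWithin_of_mem_nhds
      (Filter.mem_of_superset (Icc_mem_nhds h₁ h₂) fun x hx => hmin x hx)
end

section
/- Let a ≤ b be real numbers, let f : [a,b] → ℝ be continuous, and let u₁ < u₂ < u₃ < u₄ be points of [a,b] such that f(u₁) < f(u₂), f(u₁) < f(u₄), f(u₃) < f(u₂), and f(u₃) < f(u₄). Then there exist points s₁ < s₂ < s₃ < s₄ in [u₁, u₄] such that f(s₁) = f(s₃), f(s₂) = f(s₄), and f(s₁) < f(s₂). -/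
/-!
Let `c` be the larger of the two lows `f u₁, f u₃` and `d` the smaller of the two highs
`f u₂, f u₄`; then `c < d`. The intermediate value theorem, applied four times, gives
successively `s₁ ∈ [u₁, u₂]` at level `c`, `s₂ ∈ [s₁, u₂]` at level `d`, `s₃ ∈ [s₂, u₃]` at
level `c` and `s₄ ∈ [s₃, u₄]` at level `d`.
-/

open Set

/-- Intermediate-value step of the graph lemma: a continuous function
exhibiting a rough low–high–low–high oscillation contains four points
alternating exactly between two fixed values. -/
theorem zigzag_of_oscillation (a b : ℝ) (hab : a ≤ b) (f : ℝ → ℝ)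
    (hcont : ContinuousOn f (Icc a b))
    (u₁ u₂ u₃ u₄ : ℝ)
    (hu₁ : u₁ ∈ Icc a b) (hu₂ : u₂ ∈ Icc a b) (hu₃ : u₃ ∈ Icc a b)
    (hu₄ : u₄ ∈ Icc a b)
    (h12 : u₁ < u₂) (h23 : u₂ < u₃) (h34 : u₃ < u₄)
    (hf12 : f u₁ < f u₂) (hf14 : f u₁ < f u₄)
    (hf32 : f u₃ < f u₂) (hf34 : f u₃ < f u₄) :
    ∃ s₁ s₂ s₃ s₄ : ℝ, s₁ ∈ Icc u₁ u₄ ∧ s₂ ∈ Icc u₁ u₄ ∧ s₃ ∈ Icc u₁ u₄ ∧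
      s₄ ∈ Icc u₁ u₄ ∧ s₁ < s₂ ∧ s₂ < s₃ ∧ s₃ < s₄ ∧
      f s₁ = f s₃ ∧ f s₂ = f s₄ ∧ f s₁ < f s₂ := by
  -- The levels are `c = max (f u₁) (f u₃)` and `d = min (f u₂) (f u₄)`: both lows are at most `c`,
  -- both highs at least `d`, and the four hypotheses on `f` say exactly that `c < d`.
  obtain ⟨c, hc1, hc3, hc2, hc4, d, hcd, hd2, hd4⟩ : ∃ c, f u₁ ≤ c ∧ f u₃ ≤ c ∧ c < f u₂ ∧
      c < f u₄ ∧ ∃ d, c < d ∧ d ≤ f u₂ ∧ d ≤ f u₄ :=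
    ⟨max (f u₁) (f u₃), le_max_left _ _, le_max_right _ _, max_lt hf12 hf32, max_lt hf14 hf34,
      min (f u₂) (f u₄), lt_min (max_lt hf12 hf32) (max_lt hf14 hf34),
      min_le_left _ _, min_le_right _ _⟩
  have hsub : ∀ {x y : ℝ}, u₁ ≤ x → y ≤ u₄ → ContinuousOn f (Icc x y) := fun hx hy =>
    hcont.mono (Icc_subset_Icc (hu₁.1.trans hx) (hy.trans hu₄.2))
  -- Each point is sought to the right of the previous one, so the order is automatic;
  -- it is strict because consecutive points carry different values.
  obtain ⟨s₁, ⟨h1l, h1r⟩, e1⟩ := intermediate_value_Icc h12.le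
    (hsub le_rfl (by linarith)) ⟨hc1, hc2.le⟩
  obtain ⟨s₂, ⟨h2l, h2r⟩, e2⟩ := intermediate_value_Icc h1r
    (hsub h1l (by linarith)) ⟨e1.trans_le hcd.le, hd2⟩
  obtain ⟨s₃, ⟨h3l, h3r⟩, e3⟩ := intermediate_value_Icc' (h2r.trans h23.le)
    (hsub (by linarith) (by linarith)) ⟨hc3, hcd.le.trans_eq e2.symm⟩
  obtain ⟨s₄, ⟨h4l, h4r⟩, e4⟩ := intermediate_value_Icc (h3r.trans h34.le)
    (hsub (by linarith) le_rfl) ⟨e3.trans_le hcd.le, hd4⟩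
  have n12 : s₁ ≠ s₂ := by rintro rfl; linarith
  have n23 : s₂ ≠ s₃ := by rintro rfl; linarith
  have n34 : s₃ ≠ s₄ := by rintro rfl; linarith
  exact ⟨s₁, s₂, s₃, s₄, ⟨h1l, by linarith⟩, ⟨by linarith, by linarith⟩,
    ⟨by linarith, by linarith⟩, ⟨by linarith, h4r⟩, h2l.lt_of_ne n12, h3l.lt_of_ne n23,
    h4l.lt_of_ne n34, e1.trans e3.symm, e2.trans e4.symm, by linarith⟩
end
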